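/- A common eigenvalue of L₁ and L₂ is an eigenvalue of L₀: If λ₀ ∈ ℂ satisfies Δ₁(λ₀) = 0 and Δ₂(λ₀) = 0, then ω(λ₀) = 0. (Consequently, if Δ₁ and ω have no common zeros, then Δ₁ and Δ₂ have no common zeros.) -/

import Mathlib

open MeasureTheory Set Filter

noncomputable section

/-- A function `f : ℝ → ℂ` is absolutely continuous on `[0, T]`:
it is the indefinite integral of an integrable function. -/
def AbsContOn (f : ℝ → ℂ) (T : ℝ) : Prop :=
  ∃ g : ℝ → ℂ, IntervalIntegrable g volume 0 T ∧
    ∀ x ∈ Icc (0 : ℝ) T, f x = f 0 + ∫ t in (0 : ℝ)..x, g t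

/-- `y : ℝ → ℂ × ℂ` is a solution of the Dirac system `B y' + Ω y = λ y` on `[0, T]`,
where `B = ![![0,1],![-1,0]]` and `Ω = ![![p,q],![q,-p]]`:  `y` is continuous on `[0,T]`
and satisfies the equivalent system of integral equations coming from
`y₁' = q y₁ - (p + λ) y₂`, `y₂' = (λ - p) y₁ - q y₂`
(this encodes: `y` is absolutely continuous and the ODE holds a.e.). -/
def IsDiracSol (p q : ℝ → ℂ) (T : ℝ) (lam : ℂ) (y : ℝ → ℂ × ℂ) : Prop :=
  ContinuousOn y (Icc (0 : ℝ) T) ∧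
    ∀ x ∈ Icc (0 : ℝ) T,
      ((y x).1 = (y 0).1 + ∫ t in (0 : ℝ)..x, (q t * (y t).1 - (p t + lam) * (y t).2)) ∧
      ((y x).2 = (y 0).2 + ∫ t in (0 : ℝ)..x, ((lam - p t) * (y t).1 - q t * (y t).2))

/-- A nonlocal linear form `U(y) = ∫_{[0,T]} y₁ dμ₁ + ∫_{[0,T]} y₂ dμ₂`, where the complex
Borel measures `μᵢ` are encoded (via Radon–Nikodym) as integrable complex densities `wᵢ`
with respect to finite positive measures. -/
structure NonlocalForm (T : ℝ) where
  μ₁ : Measure ℝ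
  μ₂ : Measure ℝ
  finite₁ : IsFiniteMeasure μ₁
  finite₂ : IsFiniteMeasure μ₂
  w₁ : ℝ → ℂ
  w₂ : ℝ → ℂ
  int₁ : Integrable w₁ μ₁
  int₂ : Integrable w₂ μ₂

namespace NonlocalForm

variable {T : ℝ}

/-- The value `U(y)` of the nonlocal form on a function `y`. -/
def app (U : NonlocalForm T) (y : ℝ → ℂ × ℂ) : ℂ :=
  (∫ t in Icc (0 : ℝ) T, U.w₁ t * (y t).1 ∂U.μ₁) +
    ∫ t in Icc (0 : ℝ) T, U.w₂ t * (y t).2 ∂U.μ₂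

/-- `h₁ = μ₁({0})`, the mass of the first complex measure at `0`. -/
def h₁ (U : NonlocalForm T) : ℂ := U.w₁ 0 * ((U.μ₁ {0}).toReal : ℂ)

/-- `h₂ = μ₂({0})`, the mass of the second complex measure at `0`. -/
def h₂ (U : NonlocalForm T) : ℂ := U.w₂ 0 * ((U.μ₂ {0}).toReal : ℂ)

end NonlocalForm

/-- A two-point (local) linear form `y ↦ c₁ y₁(t) + c₂ y₂(t)`. -/
def locForm (c₁ c₂ : ℂ) (t : ℝ) (y : ℝ → ℂ × ℂ) : ℂ := c₁ * (y t).1 + c₂ * (y t).2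

/-- `f` and `g` have the same order of zero at `z` (order possibly `0` or `∞`):
for every `n`, the first `n` derivatives of `f` vanish at `z` iff
the first `n` derivatives of `g` do. -/
def ZeroOrderEq (f g : ℂ → ℂ) (z : ℂ) : Prop :=
  ∀ n : ℕ, (∀ k < n, iteratedDeriv k f z = 0) ↔ (∀ k < n, iteratedDeriv k g z = 0)

/-- The filter of `λ → ∞` within the sector `arg λ ∈ [δ, π - δ]`. -/
def sectorFilter (δ : ℝ) : Filter ℂ :=
  Filter.comap (fun lam : ℂ => ‖lam‖) Filter.atTop ⊓
    Filter.principal {lam : ℂ | Complex.arg lam ∈ Icc δ (Real.pi - δ)}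

theorem AbsContOn.contOn {f : ℝ → ℂ} {T : ℝ} (hT : 0 < T) (hf : AbsContOn f T) :
    ContinuousOn f (Icc 0 T) := by
  obtain ⟨g, hg, h⟩ := hf
  have h1 := intervalIntegral.continuousOn_primitive_interval' hg left_mem_uIcc
  rw [uIcc_of_le hT.le] at h1
  exact (continuousOn_const.add h1).congr h

theorem hasDeriv_of_integral {F f : ℝ → ℂ} {c : ℂ} {T : ℝ} (hT : 0 < T)
    (hf : ContinuousOn f (Icc 0 T))
    (h : ∀ x ∈ Icc (0 : ℝ) T, F x = c + ∫ t in (0 : ℝ)..x, f t) :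
    ∀ x ∈ Ico (0 : ℝ) T, HasDerivWithinAt F (f x) (Ici x) x := by
  intro x hx
  have hx' : x ∈ Icc (0 : ℝ) T := ⟨hx.1, hx.2.le⟩
  set g : ℝ → ℂ := IccExtend hT.le ((Icc 0 T).restrict f) with hg
  have hgc : Continuous g := (continuousOn_iff_continuous_restrict.1 hf).Icc_extend'
  have hgf : ∀ t ∈ Icc (0 : ℝ) T, g t = f t := fun t ht => by
    rw [hg, IccExtend_of_mem hT.le _ ht]; rfl
  have hd : HasDerivAt (fun u => c + ∫ t in (0 : ℝ)..u, g t) (g x) x :=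
    (hgc.integral_hasStrictDerivAt 0 x).hasDerivAt.const_add c
  have heq : ∀ u ∈ Icc (0 : ℝ) T, F u = c + ∫ t in (0 : ℝ)..u, g t := by
    intro u hu
    rw [h u hu]
    congr 1
    apply intervalIntegral.integral_congr
    intro t ht
    rw [uIcc_of_le hu.1] at ht
    exact (hgf t ⟨ht.1, ht.2.trans hu.2⟩).symm
  have h2 := (hd.hasDerivWithinAt (s := Icc 0 T)).congr heq (heq x hx')
  rw [hgf x hx'] at h2
  exact h2.mono_of_mem_nhdsWithin (Icc_mem_nhdsGE_of_mem hx)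

theorem IsDiracSol.derivs {p q : ℝ → ℂ} {T : ℝ} {l : ℂ} {y : ℝ → ℂ × ℂ} (hT : 0 < T)
    (hp : ContinuousOn p (Icc 0 T)) (hq : ContinuousOn q (Icc 0 T))
    (hy : IsDiracSol p q T l y) : ∀ x ∈ Ico (0 : ℝ) T,
    HasDerivWithinAt (fun t => (y t).1) (q x * (y x).1 - (p x + l) * (y x).2) (Ici x) x ∧
    HasDerivWithinAt (fun t => (y t).2) ((l - p x) * (y x).1 - q x * (y x).2) (Ici x) x := by
  intro x hx
  obtain ⟨hc, h⟩ := hy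
  have h1 : ContinuousOn (fun t => (y t).1) (Icc 0 T) := hc.fst
  have h2 : ContinuousOn (fun t => (y t).2) (Icc 0 T) := hc.snd
  exact ⟨hasDeriv_of_integral hT
      ((hq.mul h1).sub ((hp.add continuousOn_const).mul h2)) (fun u hu => (h u hu).1) x hx,
    hasDeriv_of_integral hT
      (((continuousOn_const.sub hp).mul h1).sub (hq.mul h2)) (fun u hu => (h u hu).2) x hx⟩

theorem dirac_wronskian {p q : ℝ → ℂ} {T : ℝ} {l : ℂ} {y z : ℝ → ℂ × ℂ} (hT : 0 < T)
    (hp : ContinuousOn p (Icc 0 T)) (hq : ContinuousOn q (Icc 0 T))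
    (hy : IsDiracSol p q T l y) (hz : IsDiracSol p q T l z) :
    (y T).1 * (z T).2 - (y T).2 * (z T).1 = (y 0).1 * (z 0).2 - (y 0).2 * (z 0).1 := by
  have hc : ContinuousOn (fun t => (y t).1 * (z t).2 - (y t).2 * (z t).1) (Icc 0 T) :=
    (hy.1.fst.mul hz.1.snd).sub (hy.1.snd.mul hz.1.fst)
  refine constant_of_has_deriv_right_zero hc ?_ T ⟨hT.le, le_rfl⟩
  intro x hx
  obtain ⟨a, b⟩ := hy.derivs hT hp hq x hx
  obtain ⟨c, d⟩ := hz.derivs hT hp hq x hx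
  refine ((a.mul d).sub (b.mul c)).congr_deriv ?_
  ring

/-- **A common eigenvalue of `L₁` and `L₂` is an eigenvalue of `L₀`**: if
`Δ₁(λ₀) = 0` and `Δ₂(λ₀) = 0` then `ω(λ₀) = 0`. -/
theorem statement18
    (T : ℝ) (hT : 0 < T)
    (p q : ℝ → ℂ) (hp : AbsContOn p T) (hq : AbsContOn q T)
    (U₁ U₂ : NonlocalForm T)
    (lam₀ : ℂ)
    (X₁ X₂ : ℝ → ℂ × ℂ)
    (hX₁ : IsDiracSol p q T lam₀ X₁ ∧ X₁ 0 = (1, 0))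
    (hX₂ : IsDiracSol p q T lam₀ X₂ ∧ X₂ 0 = (0, 1))
    (hΔ₁ : U₁.app X₁ * (X₂ T).1 - U₁.app X₂ * (X₁ T).1 = 0)
    (hΔ₂ : U₂.app X₁ * (X₂ T).1 - U₂.app X₂ * (X₁ T).1 = 0) :
    U₁.app X₁ * U₂.app X₂ - U₁.app X₂ * U₂.app X₁ = 0 := by
  have W := dirac_wronskian hT (hp.contOn hT) (hq.contOn hT) hX₁.1 hX₂.1
  rw [hX₁.2, hX₂.2] at W
  simp only [mul_one, mul_zero, sub_zero] at W
  linear_combination (-(U₁.app X₁ * U₂.app X₂ - U₁.app X₂ * U₂.app X₁)) * W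
    + (U₂.app X₁ * (X₂ T).2 - U₂.app X₂ * (X₁ T).2) * hΔ₁
    - (U₁.app X₁ * (X₂ T).2 - U₁.app X₂ * (X₁ T).2) * hΔ₂
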